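/- Let I ⊆ K[x_1, ..., x_n] be an unmixed matroidal ideal of degree d with supp(I) = {x_1, ..., x_n} and n ≥ 2, and let h = ht(I). Then h + d − 1 ≤ n ≤ hd. Moreover, n = h + d − 1 if and only if I is the square-free Veronese ideal of degree d in x_1, ..., x_n; and n = hd if and only if I = J_1 · J_2 ⋯ J_d, where each J_i is generated by h distinct variables and the supports of the J_i are pairwise disjoint. -/

import Mathlib

/-!
For a matroidal ideal `I` with set of bases `B`, the primes generated by the minimal transversals
(minimal sets of variables meeting every basis, i.e. the cocircuits) are associated primes of `I`,
and every prime containing `I` contains one of them. Hence, if `I` is unmixed of height `h`, all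
minimal transversals have exactly `h` elements (`card_of_minimal`).

The rest is matroid theory. For a basis `b` and `i ∈ b`, the fundamental cocircuit
`funCocircuit B b i` consists of all `e` such that `b - i + e` is a basis. It is a minimal
transversal, so it has `h` elements, and it is disjoint from `b - i`; this gives `h + d - 1 ≤ n`.
Since there are no loops, the `d` fundamental cocircuits of `b` cover everything, by dual exchange
(`exists_mem_funCocircuit`); this gives `n ≤ h * d`.

If `n = h + d - 1`, each fundamental cocircuit `funCocircuit B b i` is the whole complement of
`b - i`, so any element of a basis may be replaced by any element outside it, and all `d`-sets are
bases. If `n = h * d`, the fundamental cocircuits of one basis `b` partition the variables; every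
basis meets each block, hence meets it exactly once, and then exchange shows that every choice of
one element per block is a basis. The two converses are counting arguments.
-/

open MvPolynomial

/-- The square-free monomial `∏ i in S, X i`. -/
noncomputable def sqMon {n : ℕ} (K : Type*) [Field K] (S : Finset (Fin n)) :
    MvPolynomial (Fin n) K := ∏ i ∈ S, X i

/-- The basis-exchange property for a family of supports. -/
def ExchangeProp {n : ℕ} (B : Finset (Finset (Fin n))) : Prop :=
  ∀ u ∈ B, ∀ v ∈ B, ∀ i ∈ u, i ∉ v → ∃ j ∈ v, j ∉ u ∧ insert j (u.erase i) ∈ B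

/-- `I` is a matroidal ideal of degree `d`, whose minimal monomial generators are the
square-free monomials with supports in `B`. -/
def IsMatroidal {n : ℕ} (K : Type*) [Field K] (I : Ideal (MvPolynomial (Fin n) K))
    (B : Finset (Finset (Fin n))) (d : ℕ) : Prop :=
  B.Nonempty ∧ (∀ S ∈ B, S.card = d) ∧ ExchangeProp B ∧
    I = Ideal.span (sqMon K '' (B : Set (Finset (Fin n))))

/-- `supp(I) = {x_1, …, x_n}` for a matroidal ideal with generating supports `B`. -/
def FullSupport {n : ℕ} (B : Finset (Finset (Fin n))) : Prop :=
  ∀ i : Fin n, ∃ S ∈ B, i ∈ S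

/-- The height of an ideal: the infimum of the heights of the primes containing it. -/
noncomputable def idealHeight {A : Type*} [CommRing A] (I : Ideal A) : ℕ∞ :=
  ⨅ (p : PrimeSpectrum A) (_ : I ≤ p.asIdeal), Order.height p

/-- The `J`-depth of the ring `A`: the supremum of the lengths of regular sequences
contained in `J`. -/
noncomputable def ringDepth (A : Type*) [CommRing A] (J : Ideal A) : ℕ∞ :=
  ⨆ (rs : {l : List A // (∀ r ∈ l, r ∈ J) ∧ RingTheory.Sequence.IsRegular A l}),
    (rs.1.length : ℕ∞)

/-- A commutative ring is Cohen–Macaulay if at every maximal ideal the depth of the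
localization equals its Krull dimension. -/
def IsCohenMacaulayRing (A : Type*) [CommRing A] : Prop :=
  ∀ (p : Ideal A) (hp : p.IsMaximal),
    letI : p.IsPrime := hp.isPrime
    (ringDepth (Localization.AtPrime p)
        (IsLocalRing.maximalIdeal (Localization.AtPrime p)) : WithBot ℕ∞)
      = ringKrullDim (Localization.AtPrime p)

/-- The arithmetical rank of an ideal. -/
noncomputable def araIdeal {A : Type*} [CommRing A] (I : Ideal A) : ℕ :=
  sInf {m : ℕ | ∃ f : Fin m → A, (Ideal.span (Set.range f)).radical = I.radical}

/-- An ideal is unmixed if all of its associated primes have the same height. -/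
def IsUnmixed {A : Type*} [CommRing A] (I : Ideal A) : Prop :=
  ∀ p ∈ associatedPrimes A (A ⧸ I), ∀ q ∈ associatedPrimes A (A ⧸ I),
    idealHeight p = idealHeight q

/-- The square-free Veronese ideal of degree `d` in all the variables. -/
noncomputable def sqVeronese {n : ℕ} (K : Type*) [Field K] (d : ℕ) :
    Ideal (MvPolynomial (Fin n) K) :=
  Ideal.span (sqMon K '' {S : Finset (Fin n) | S.card = d})

/-- The ordering `u` of the generating supports, together with the variable sets `V`,
witnesses that the square-free monomial ideal generated by `sqMon K ∘ u` has linear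
quotients: each colon ideal `⟨u_0, …, u_{j-1}⟩ : u_j` is generated by the variables in
`V j`. -/
def LinearQuotientWitness {n s : ℕ} (K : Type*) [Field K]
    (u : Fin s → Finset (Fin n)) (V : Fin s → Finset (Fin n)) : Prop :=
  ∀ j : Fin s,
    (Ideal.span (sqMon K '' (u '' {k | k < j}))).colon (Ideal.span {sqMon K (u j)})
      = Ideal.span ((fun i => (X i : MvPolynomial (Fin n) K)) '' (V j : Set (Fin n)))

/-- The linear quotient index `q(I)` attached to a linear quotient witness:
the maximum, over `j ≥ 1`, of the number of variables generating the `j`-th colon ideal. -/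
def lqIndex {n s : ℕ} (V : Fin s → Finset (Fin n)) : ℕ :=
  (Finset.univ.filter fun j : Fin s => (j : ℕ) ≠ 0).sup fun j => (V j).card

open CategoryTheory in
/-- The module `M` has projective dimension at most `k`. -/
def HasProjDimLE {A : Type*} [CommRing A] (M : ModuleCat A) (k : ℕ) : Prop :=
  ∃ P : ProjectiveResolution M, ∀ i : ℕ, k < i → Limits.IsZero (P.complex.X i)

/-- The ideal generated by the variables `X i`, `i ∈ A`. -/
noncomputable def varIdeal {n : ℕ} (K : Type*) [Field K] (A : Finset (Fin n)) :
    Ideal (MvPolynomial (Fin n) K) :=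
  Ideal.span ((fun i => (X i : MvPolynomial (Fin n) K)) '' (A : Set (Fin n)))

/-! ### Ideals generated by variables -/

section Algebra

variable {K : Type*} [Field K] {n : ℕ}

/-- The substitution `X i ↦ 0` for `i ∈ C`; its kernel is `varIdeal K C`. -/
noncomputable def killVars (K : Type*) [Field K] (C : Finset (Fin n)) :
    MvPolynomial (Fin n) K →ₐ[K] MvPolynomial (Fin n) K :=
  aeval fun i => if i ∈ C then 0 else X i

lemma mem_varIdeal_iff_killVars {C : Finset (Fin n)} {f : MvPolynomial (Fin n) K} :
    f ∈ varIdeal K C ↔ killVars K C f = 0 := by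
  constructor
  · intro hf
    have hle : varIdeal K C ≤ RingHom.ker (killVars K C) := by
      rw [varIdeal, Ideal.span_le]
      rintro _ ⟨i, hi, rfl⟩
      have hi' : i ∈ C := hi
      simp [RingHom.mem_ker, killVars, hi']
    exact hle hf
  · intro hf
    -- modulo `varIdeal K C` the substitution is the identity
    have key : (Ideal.Quotient.mkₐ K (varIdeal K C)).comp (killVars K C)
        = Ideal.Quotient.mkₐ K (varIdeal K C) := by
      ext i
      by_cases hi : i ∈ C
      · have : Ideal.Quotient.mk (varIdeal K C) (X i) = 0 :=
          Ideal.Quotient.eq_zero_iff_mem.mpr (Ideal.subset_span ⟨i, hi, rfl⟩)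
        simp [killVars, hi, this]
      · simp [killVars, hi]
    have := DFunLike.congr_fun key f
    simp only [AlgHom.comp_apply, hf, map_zero] at this
    exact Ideal.Quotient.eq_zero_iff_mem.mp this.symm

lemma varIdeal_isPrime (C : Finset (Fin n)) : (varIdeal K C).IsPrime := by
  have : varIdeal K C = RingHom.ker (killVars K C) := by
    ext f; rw [mem_varIdeal_iff_killVars, RingHom.mem_ker]
  rw [this]
  exact RingHom.ker_isPrime _

lemma X_mem_varIdeal {C : Finset (Fin n)} {i : Fin n} :
    (X i : MvPolynomial (Fin n) K) ∈ varIdeal K C ↔ i ∈ C := by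
  rw [mem_varIdeal_iff_killVars]
  by_cases hi : i ∈ C <;> simp [killVars, hi]

lemma sqMon_mem_varIdeal {C S : Finset (Fin n)} :
    sqMon K S ∈ varIdeal K C ↔ ∃ i ∈ S, i ∈ C := by
  have := varIdeal_isPrime (K := K) C
  simp [sqMon, Ideal.IsPrime.prod_mem_iff, X_mem_varIdeal]

lemma varIdeal_le_iff {C : Finset (Fin n)} {p : Ideal (MvPolynomial (Fin n) K)} :
    varIdeal K C ≤ p ↔ ∀ i ∈ C, X i ∈ p := by
  rw [varIdeal, Ideal.span_le]
  exact ⟨fun h i hi => h ⟨i, hi, rfl⟩, by rintro h _ ⟨i, hi, rfl⟩; exact h i hi⟩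

lemma idealHeight_of_isPrime {A : Type*} [CommRing A] (p : PrimeSpectrum A) :
    idealHeight p.asIdeal = Order.height p := by
  apply le_antisymm
  · exact iInf₂_le p le_rfl
  · exact le_iInf₂ fun q hq => Order.height_mono hq

lemma card_le_height (C : Finset (Fin n)) :
    (C.card : ℕ∞) ≤ Order.height
      (⟨varIdeal K C, varIdeal_isPrime C⟩ : PrimeSpectrum (MvPolynomial (Fin n) K)) := by
  induction C using Finset.induction_on with
  | empty => simp
  | insert a C ha ih =>
    rw [Finset.card_insert_of_notMem ha, Nat.cast_add, Nat.cast_one]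
    have hlt : (⟨varIdeal K C, varIdeal_isPrime C⟩ : PrimeSpectrum (MvPolynomial (Fin n) K))
        < ⟨varIdeal K (insert a C), varIdeal_isPrime _⟩ := by
      rw [← PrimeSpectrum.asIdeal_lt_asIdeal]
      refine lt_of_le_of_ne (varIdeal_le_iff.mpr fun i hi => X_mem_varIdeal.mpr
        (Finset.mem_insert_of_mem hi)) fun h => ha ?_
      rw [← X_mem_varIdeal (K := K)]
      change varIdeal K C = varIdeal K (insert a C) at h
      rw [h]
      exact X_mem_varIdeal.mpr (Finset.mem_insert_self _ _)
    exact (add_le_add_left ih 1).trans (Order.height_add_one_le hlt)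

/-- The lower bound comes from a chain of ideals generated by variables, the upper bound from
Krull's height theorem. -/
lemma idealHeight_varIdeal (C : Finset (Fin n)) : idealHeight (varIdeal K C) = C.card := by
  classical
  have hp := varIdeal_isPrime (K := K) C
  have h := idealHeight_of_isPrime (⟨varIdeal K C, hp⟩ : PrimeSpectrum (MvPolynomial (Fin n) K))
  change idealHeight (varIdeal K C) = _ at h
  rw [h]
  refine le_antisymm ?_ (card_le_height C)
  rw [← PrimeSpectrum.height_eq_orderHeight]
  have hspan : varIdeal K C
      = Ideal.span (C.image (fun i => (X i : MvPolynomial (Fin n) K)) : Set _) := by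
    rw [varIdeal, Finset.coe_image]
  have := Ideal.height_le_card_of_mem_minimalPrimes_span_finset (p := varIdeal K C)
    (s := C.image (fun i => (X i : MvPolynomial (Fin n) K)))
    (by rw [← hspan, Ideal.minimalPrimes_eq_subsingleton_self]; rfl)
  exact this.trans (by exact_mod_cast Finset.card_image_le)

lemma prod_varIdeal {d : ℕ} (J : Fin d → Finset (Fin n))
    (hdisj : ∀ k l, k ≠ l → Disjoint (J k) (J l)) :
    ∏ k, varIdeal K (J k) = Ideal.span (sqMon K ''
      {T | ∃ f : Fin d → Fin n, (∀ k, f k ∈ J k) ∧ T = Finset.univ.image f}) := by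
  have hprod : ∀ f : Fin d → Fin n, (∀ k, f k ∈ J k) →
      sqMon K (Finset.univ.image f) = ∏ k, X (f k) := by
    intro f hf
    rw [sqMon, Finset.prod_image]
    intro k _ l _ hkl
    by_contra hne
    exact Finset.disjoint_left.mp (hdisj k l hne) (hf k) (hkl ▸ hf l)
  simp only [varIdeal]
  rw [Ideal.prod_span]
  congr 1
  ext p
  rw [Set.mem_fintype_prod]
  constructor
  · rintro ⟨g, hg, rfl⟩
    choose f hf hfg using @hg
    refine ⟨_, ⟨fun k => f k, fun k => hf k, rfl⟩, ?_⟩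
    rw [hprod _ fun k => hf k]
    exact Finset.prod_congr rfl fun k _ => hfg k
  · rintro ⟨_, ⟨f, hf, rfl⟩, rfl⟩
    exact ⟨fun k => X (f k), fun {k} => ⟨f k, hf k, rfl⟩, (hprod f hf).symm⟩

end Algebra

/-! ### Minimal transversals and associated primes -/

section Transversals

variable {K : Type*} [Field K] {n : ℕ} {B : Finset (Finset (Fin n))}

/-- `C` meets every member of `B`. -/
def IsTransversal (B : Finset (Finset (Fin n))) (C : Finset (Fin n)) : Prop :=
  ∀ S ∈ B, ∃ i ∈ S, i ∈ C

lemma span_le_varIdeal_iff {C : Finset (Fin n)} :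
    Ideal.span (sqMon K '' (B : Set (Finset (Fin n)))) ≤ varIdeal K C ↔ IsTransversal B C := by
  rw [Ideal.span_le]
  constructor
  · intro h S hS
    exact sqMon_mem_varIdeal.mp (h ⟨S, hS, rfl⟩)
  · rintro h _ ⟨S, hS, rfl⟩
    exact sqMon_mem_varIdeal.mpr (h S hS)

lemma exists_private_of_minimal {C : Finset (Fin n)} (hC : Minimal (IsTransversal B) C)
    {c : Fin n} (hc : c ∈ C) : ∃ S ∈ B, ∀ i ∈ S, i ∈ C → i = c := by
  by_contra! hcon
  have : IsTransversal B (C.erase c) := fun S hS => by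
    obtain ⟨i, hi, hiC, hne⟩ := hcon S hS
    exact ⟨i, hi, Finset.mem_erase.mpr ⟨hne, hiC⟩⟩
  exact Finset.notMem_erase c C (hC.2 this (Finset.erase_subset _ _) hc)

/-- The prime of a minimal transversal `C` is the annihilator modulo the ideal of the product of
the variables outside `C`. -/
lemma varIdeal_mem_associatedPrimes {C : Finset (Fin n)} (hC : Minimal (IsTransversal B) C) :
    varIdeal K C ∈ associatedPrimes (MvPolynomial (Fin n) K)
      (MvPolynomial (Fin n) K ⧸ Ideal.span (sqMon K '' (B : Set (Finset (Fin n))))) := by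
  classical
  set I := Ideal.span (sqMon K '' (B : Set (Finset (Fin n))))
  have hp := varIdeal_isPrime (K := K) C
  have hle : I ≤ varIdeal K C := span_le_varIdeal_iff.mpr hC.1
  refine ⟨hp, Ideal.Quotient.mk I (sqMon K Cᶜ), ?_⟩
  have hcol : ((⊥ : Submodule (MvPolynomial (Fin n) K) (MvPolynomial (Fin n) K ⧸ I)).colon
      {Ideal.Quotient.mk I (sqMon K Cᶜ)}) = varIdeal K C := by
    ext f
    have hsmul : f • Ideal.Quotient.mk I (sqMon K Cᶜ) = Ideal.Quotient.mk I (f * sqMon K Cᶜ) := rfl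
    rw [Submodule.mem_colon_singleton, Submodule.mem_bot, hsmul, Ideal.Quotient.eq_zero_iff_mem]
    constructor
    · intro hf
      refine (hp.mem_or_mem (hle hf)).resolve_right fun h => ?_
      obtain ⟨i, hi, hiC⟩ := sqMon_mem_varIdeal.mp h
      exact Finset.mem_compl.mp hi hiC
    · intro hf
      have hsub : varIdeal K C ≤ I.colon {sqMon K Cᶜ} := by
        rw [varIdeal_le_iff]
        intro c hc
        rw [Submodule.mem_colon_singleton, smul_eq_mul]
        -- a generator meeting `C` only in `c` divides `X c` times the product
        obtain ⟨S, hS, hSC⟩ := exists_private_of_minimal hC hc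
        have hmul : (X c : MvPolynomial (Fin n) K) * sqMon K Cᶜ = sqMon K (insert c Cᶜ) := by
          rw [sqMon, sqMon, Finset.prod_insert (by simpa using hc)]
        rw [hmul]
        refine Ideal.mem_of_dvd I (Finset.prod_dvd_prod_of_subset S _ _ fun i hi => ?_)
          (Ideal.subset_span ⟨S, hS, rfl⟩)
        by_cases hiC : i ∈ C
        · simp [hSC i hi hiC]
        · simp [hiC]
      simpa [Submodule.mem_colon_singleton] using hsub hf
  rw [hcol, hp.radical]

/-- For an unmixed squarefree monomial ideal, every minimal transversal has as many elements as the
height. -/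
lemma card_of_minimal {h : ℕ}
    (hun : IsUnmixed (Ideal.span (sqMon K '' (B : Set (Finset (Fin n))))))
    (hh : idealHeight (Ideal.span (sqMon K '' (B : Set (Finset (Fin n))))) = (h : ℕ∞))
    {C : Finset (Fin n)} (hC : Minimal (IsTransversal B) C) : C.card = h := by
  classical
  have key : (C.card : ℕ∞) = h := by
    rw [← hh]
    apply le_antisymm
    · refine le_iInf₂ fun p hp => ?_
      -- the variables in `p` form a transversal, which contains a minimal one
      have htr : IsTransversal B (Finset.univ.filter fun i => X i ∈ p.asIdeal) := by
        intro S hS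
        have : sqMon K S ∈ p.asIdeal := hp (Ideal.subset_span ⟨S, hS, rfl⟩)
        rw [sqMon, p.isPrime.prod_mem_iff] at this
        simpa using this
      obtain ⟨D, hDle, hD⟩ := exists_minimal_le_of_wellFoundedLT (IsTransversal B) _ htr
      have h1 := hun _ (varIdeal_mem_associatedPrimes hC) _ (varIdeal_mem_associatedPrimes hD)
      rw [idealHeight_varIdeal, idealHeight_varIdeal] at h1
      rw [h1]
      refine (card_le_height (K := K) D).trans (Order.height_mono ?_)
      rw [← PrimeSpectrum.asIdeal_le_asIdeal]
      exact varIdeal_le_iff.mpr fun i hi => (Finset.mem_filter.mp (hDle hi)).2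
    · rw [← idealHeight_varIdeal (K := K) C]
      exact le_iInf₂ fun p hp => iInf₂_le p ((span_le_varIdeal_iff.mpr hC.1).trans hp)
  exact_mod_cast key

end Transversals

/-! ### Fundamental cocircuits -/

section Matroid

variable {n d h : ℕ} {B : Finset (Finset (Fin n))}

/-- The fundamental cocircuit of `i ∈ b` with respect to the basis `b`: all `e` for which
`b - i + e` is a basis. -/
def funCocircuit (B : Finset (Finset (Fin n))) (b : Finset (Fin n)) (i : Fin n) :
    Finset (Fin n) :=
  Finset.univ.filter fun e => insert e (b.erase i) ∈ B

lemma mem_funCocircuit {b : Finset (Fin n)} {i e : Fin n} :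
    e ∈ funCocircuit B b i ↔ insert e (b.erase i) ∈ B := by
  simp [funCocircuit]

lemma self_mem_funCocircuit {b : Finset (Fin n)} (hb : b ∈ B) {i : Fin n} (hi : i ∈ b) :
    i ∈ funCocircuit B b i := by
  rwa [mem_funCocircuit, Finset.insert_erase hi]

lemma disjoint_funCocircuit (hcard : ∀ S ∈ B, S.card = d) {b : Finset (Fin n)} (hb : b ∈ B)
    {i : Fin n} (hi : i ∈ b) : Disjoint (funCocircuit B b i) (b.erase i) := by
  rw [Finset.disjoint_left]
  intro e he heb
  rw [mem_funCocircuit, Finset.insert_eq_of_mem heb] at he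
  have h1 := hcard _ he
  have h2 := hcard _ hb
  have h3 := Finset.card_erase_lt_of_mem hi
  omega

lemma minimal_funCocircuit (hcard : ∀ S ∈ B, S.card = d) (hex : ExchangeProp B)
    {b : Finset (Fin n)} (hb : b ∈ B) {i : Fin n} (hi : i ∈ b) :
    Minimal (IsTransversal B) (funCocircuit B b i) := by
  constructor
  · intro S hS
    by_cases hiS : i ∈ S
    · exact ⟨i, hiS, self_mem_funCocircuit hb hi⟩
    · obtain ⟨j, hj, -, hB⟩ := hex b hb S hS i hi hiS
      exact ⟨j, hj, mem_funCocircuit.mpr hB⟩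
  · intro D hD hle c hc
    -- the basis `b - i + c` meets the cocircuit only in `c`
    obtain ⟨j, hj, hjD⟩ := hD _ (mem_funCocircuit.mp hc)
    rcases Finset.mem_insert.mp hj with rfl | hj
    · exact hjD
    · exact absurd hj (Finset.disjoint_left.mp (disjoint_funCocircuit hcard hb hi) (hle hjD))

lemma card_inter_lt_exchange {S T : Finset (Fin n)} {i j : Fin n} (hiT : i ∉ T)
    (hjT : j ∈ T) (hjS : j ∉ S) : (S ∩ T).card < (insert j (S.erase i) ∩ T).card := by
  apply Finset.card_lt_card
  rw [Finset.ssubset_iff]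
  refine ⟨j, by simp [hjS], fun x hx => ?_⟩
  rcases Finset.mem_insert.mp hx with rfl | hx
  · simp [hjT]
  · have hxi : x ≠ i := by rintro rfl; exact hiT (Finset.mem_inter.mp hx).2
    have := Finset.mem_inter.mp hx
    simp [this.1, this.2, hxi]

/-- Dual exchange: in the absence of loops, the fundamental cocircuits of a basis cover the ground
set. -/
lemma exists_mem_funCocircuit (hcard : ∀ S ∈ B, S.card = d) (hex : ExchangeProp B)
    (hsupp : FullSupport B) {b : Finset (Fin n)} (hb : b ∈ B) (e : Fin n) :
    ∃ i ∈ b, e ∈ funCocircuit B b i := by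
  by_cases heb : e ∈ b
  · exact ⟨e, heb, self_mem_funCocircuit hb heb⟩
  obtain ⟨S₀, hS₀, heS₀⟩ := hsupp e
  -- a basis through `e` sharing as many elements as possible with `b`
  obtain ⟨S, hS, hmax⟩ := (B.filter (e ∈ ·)).exists_max_image (fun S => (S ∩ b).card)
    ⟨S₀, Finset.mem_filter.mpr ⟨hS₀, heS₀⟩⟩
  obtain ⟨hSB, heS⟩ := Finset.mem_filter.mp hS
  have hsub : S.erase e ⊆ b := by
    intro f hf
    obtain ⟨hfe, hfS⟩ := Finset.mem_erase.mp hf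
    by_contra hfb
    obtain ⟨j, hjb, hjS, hB⟩ := hex S hSB b hb f hfS hfb
    have h1 := hmax _ (Finset.mem_filter.mpr ⟨hB, by simp [heS, hfe.symm]⟩)
    have h2 := card_inter_lt_exchange hfb hjb hjS
    exact absurd h1 (not_le.mpr h2)
  have h1 : (b \ S.erase e).card = 1 := by
    rw [Finset.card_sdiff_of_subset hsub, Finset.card_erase_of_mem heS, hcard _ hb, hcard _ hSB]
    have : 0 < S.card := Finset.card_pos.mpr ⟨e, heS⟩
    have := hcard _ hSB
    omega
  obtain ⟨i, hi⟩ := Finset.card_eq_one.mp h1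
  have hib : i ∈ b \ S.erase e := by rw [hi]; exact Finset.mem_singleton_self i
  refine ⟨i, (Finset.mem_sdiff.mp hib).1, mem_funCocircuit.mpr ?_⟩
  have : b.erase i = S.erase e := by
    rw [Finset.erase_eq, ← hi, Finset.sdiff_sdiff_eq_self hsub]
  rwa [this, Finset.insert_erase heS]

lemma biUnion_funCocircuit (hcard : ∀ S ∈ B, S.card = d) (hex : ExchangeProp B)
    (hsupp : FullSupport B) {b : Finset (Fin n)} (hb : b ∈ B) :
    b.biUnion (funCocircuit B b) = Finset.univ := by
  ext e
  simpa using exists_mem_funCocircuit hcard hex hsupp hb e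

/-- If every fundamental cocircuit `funCocircuit B b i` is as large as the complement of `b - i`,
the matroid is uniform. -/
lemma mem_of_card_of_eq (hne : B.Nonempty) (hcard : ∀ S ∈ B, S.card = d)
    (hd : 0 < d) (hC : ∀ b ∈ B, ∀ i ∈ b, (funCocircuit B b i).card = h) (hn : n = h + d - 1)
    {T : Finset (Fin n)} (hT : T.card = d) : T ∈ B := by
  obtain ⟨S, hS, hmax⟩ := B.exists_max_image (fun S => (S ∩ T).card) hne
  by_contra hTB
  have hST : ¬ S ⊆ T := fun hsub => hTB
    (Finset.eq_of_subset_of_card_le hsub (by rw [hT, hcard _ hS]) ▸ hS)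
  have hTS : ¬ T ⊆ S := fun hsub => hTB
    (Finset.eq_of_subset_of_card_le hsub (by rw [hT, hcard _ hS]) ▸ hS)
  obtain ⟨i, hiS, hiT⟩ := Finset.not_subset.mp hST
  obtain ⟨j, hjT, hjS⟩ := Finset.not_subset.mp hTS
  have hun : funCocircuit B S i ∪ S.erase i = Finset.univ := by
    rw [← Finset.card_eq_iff_eq_univ, Finset.card_union_of_disjoint
      (disjoint_funCocircuit hcard hS hiS), hC S hS i hiS, Finset.card_erase_of_mem hiS,
      hcard _ hS, Fintype.card_fin]
    omega
  have hj : j ∈ funCocircuit B S i := by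
    have := Finset.mem_univ j
    rw [← hun, Finset.mem_union] at this
    exact this.resolve_right fun h => hjS (Finset.mem_of_mem_erase h)
  exact absurd (hmax _ (mem_funCocircuit.mp hj))
    (not_le.mpr (card_inter_lt_exchange hiT hjT hjS))

/-- Given `d` pairwise disjoint transversals `J k` of a loopless matroid of rank `d`, the bases are
exactly the sets made of one element from each `J k`. A basis meets each `J k` exactly once, so an
exchange bringing an element of `J k` into a basis must remove the previous one. -/
lemma mem_iff_of_partition (hne : B.Nonempty) (hcard : ∀ S ∈ B, S.card = d)
    (hex : ExchangeProp B) (hsupp : FullSupport B) {J : Fin d → Finset (Fin n)}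
    (htr : ∀ k, IsTransversal B (J k)) (hdisj : ∀ k l, k ≠ l → Disjoint (J k) (J l))
    {T : Finset (Fin n)} :
    T ∈ B ↔ ∃ f : Fin d → Fin n, (∀ k, f k ∈ J k) ∧ T = Finset.univ.image f := by
  have hinj : ∀ f : Fin d → Fin n, (∀ k, f k ∈ J k) → Function.Injective f := by
    intro f hf k l hkl
    by_contra hne
    exact Finset.disjoint_left.mp (hdisj k l hne) (hf k) (hkl ▸ hf l)
  have hfwd : ∀ T ∈ B, ∃ f : Fin d → Fin n, (∀ k, f k ∈ J k) ∧ T = Finset.univ.image f := by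
    intro T hT
    choose f hfT hfJ using fun k => htr k T hT
    refine ⟨f, hfJ, (Finset.eq_of_subset_of_card_le ?_ ?_).symm⟩
    · intro x hx
      obtain ⟨k, -, rfl⟩ := Finset.mem_image.mp hx
      exact hfT k
    · rw [Finset.card_image_of_injective _ (hinj f hfJ), hcard T hT]; simp
  refine ⟨hfwd T, ?_⟩
  rintro ⟨f, hf, rfl⟩
  set T := Finset.univ.image f with hTdef
  have hTd : T.card = d := by
    rw [hTdef, Finset.card_image_of_injective _ (hinj f hf)]; simp
  obtain ⟨S, hS, hmax⟩ := B.exists_max_image (fun S => (S ∩ T).card) hne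
  by_contra hTB
  have hTS : ¬ T ⊆ S := fun hsub => hTB
    (Finset.eq_of_subset_of_card_le hsub (by rw [hTd, hcard _ hS]) ▸ hS)
  obtain ⟨t, htT, htS⟩ := Finset.not_subset.mp hTS
  obtain ⟨i, hi, hti⟩ := exists_mem_funCocircuit hcard hex hsupp hS t
  have hB := mem_funCocircuit.mp hti
  refine absurd (hmax _ hB) (not_le.mpr (card_inter_lt_exchange (fun hiT => ?_) htT htS))
  -- if the discarded element `i` were in `T`, its block would not be that of `t`, and the basis
  -- `S - i + t` would miss it
  obtain ⟨k, -, rfl⟩ := Finset.mem_image.mp htT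
  obtain ⟨l, -, rfl⟩ := Finset.mem_image.mp hiT
  have hlk : k ≠ l := by rintro rfl; exact htS hi
  obtain ⟨x, hx, hxJ⟩ := htr l _ hB
  obtain ⟨g, hg, hgS⟩ := hfwd S hS
  have hone : ∀ y ∈ S, y ∈ J l → y = g l := by
    intro y hy hyJ
    rw [hgS] at hy
    obtain ⟨m, -, rfl⟩ := Finset.mem_image.mp hy
    by_contra hne
    have hml : m ≠ l := by rintro rfl; exact hne rfl
    exact Finset.disjoint_left.mp (hdisj m l hml) (hg m) hyJ
  rcases Finset.mem_insert.mp hx with rfl | hx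
  · exact Finset.disjoint_left.mp (hdisj k l hlk) (hf k) hxJ
  · obtain ⟨hne', hxS⟩ := Finset.mem_erase.mp hx
    exact hne' ((hone x hxS hxJ).trans (hone _ hi (hf l)).symm)

end Matroid

/-! ### The bounds and the equality cases -/

/-- Let `I ⊆ K[x_1, …, x_n]` be an unmixed matroidal ideal of degree `d`
with `supp(I) = {x_1, …, x_n}` and `n ≥ 2`, and let `h = ht(I)`.  Then
`h + d − 1 ≤ n ≤ h·d`.  Moreover `n = h + d − 1` iff `I` is square-free Veronese, and
`n = h·d` iff `I = J_1 ⋯ J_d` with each `J_i` generated by `h` distinct variables and the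
supports of the `J_i` pairwise disjoint. -/
theorem statement9 {K : Type*} [Field K] {n d h : ℕ} (hn : 2 ≤ n)
    {I : Ideal (MvPolynomial (Fin n) K)} {B : Finset (Finset (Fin n))}
    (hI : IsMatroidal K I B d) (hsupp : FullSupport B) (hun : IsUnmixed I)
    (hh : idealHeight I = (h : ℕ∞)) :
    (h + d - 1 ≤ n ∧ n ≤ h * d) ∧
    (n = h + d - 1 ↔ I = sqVeronese K d) ∧
    (n = h * d ↔ ∃ J : Fin d → Finset (Fin n),
      (∀ i, (J i).card = h) ∧ (∀ i j, i ≠ j → Disjoint (J i) (J j)) ∧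
      I = ∏ i, varIdeal K (J i)) := by
  obtain ⟨hne, hcard, hex, rfl⟩ := hI
  obtain ⟨b, hb⟩ := hne
  have hd : 0 < d := by
    obtain ⟨S, hS, h0⟩ := hsupp ⟨0, by omega⟩
    rw [← hcard S hS]
    exact Finset.card_pos.mpr ⟨_, h0⟩
  have hC : ∀ b ∈ B, ∀ i ∈ b, (funCocircuit B b i).card = h := fun b hb i hi =>
    card_of_minimal hun hh (minimal_funCocircuit hcard hex hb hi)
  obtain ⟨i₀, hi₀⟩ : b.Nonempty := Finset.card_pos.mp (by rw [hcard b hb]; exact hd)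
  have hlow : h + d - 1 ≤ n := by
    have := Finset.card_le_univ (funCocircuit B b i₀ ∪ b.erase i₀)
    rw [Finset.card_union_of_disjoint (disjoint_funCocircuit hcard hb hi₀), hC b hb i₀ hi₀,
      Finset.card_erase_of_mem hi₀, hcard b hb, Fintype.card_fin] at this
    omega
  have hsum : ∑ i ∈ b, (funCocircuit B b i).card = h * d := by
    rw [Finset.sum_congr rfl (hC b hb), Finset.sum_const, hcard b hb, smul_eq_mul, mul_comm]
  have hup : n ≤ h * d := by
    have := Finset.card_biUnion_le (s := b) (t := funCocircuit B b)
    rwa [biUnion_funCocircuit hcard hex hsupp hb, Finset.card_univ, Fintype.card_fin,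
      hsum] at this
  refine ⟨⟨hlow, hup⟩, ⟨fun hn' => ?_, fun hV => ?_⟩, ⟨fun hn' => ?_, ?_⟩⟩
  · have : (B : Set (Finset (Fin n))) = {S | S.card = d} := by
      ext T
      exact ⟨hcard T, mem_of_card_of_eq ⟨b, hb⟩ hcard hd hC hn'⟩
    rw [sqVeronese, this]
  · -- a cocircuit meets every `d`-set, so its complement has fewer than `d` elements
    have hle : sqVeronese K d ≤ varIdeal K (funCocircuit B b i₀) :=
      hV ▸ span_le_varIdeal_iff.mpr (minimal_funCocircuit hcard hex hb hi₀).1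
    have hlt : (funCocircuit B b i₀)ᶜ.card < d := by
      by_contra! hge
      obtain ⟨T, hTsub, hT⟩ := Finset.exists_subset_card_eq hge
      obtain ⟨j, hjT, hj⟩ := sqMon_mem_varIdeal.mp (hle (Ideal.subset_span ⟨T, hT, rfl⟩))
      exact Finset.mem_compl.mp (hTsub hjT) hj
    rw [Finset.card_compl, Fintype.card_fin, hC b hb i₀ hi₀] at hlt
    omega
  · -- equality in the union bound makes the fundamental cocircuits of `b` pairwise disjoint
    have hdisj : (b : Set (Fin n)).PairwiseDisjoint (funCocircuit B b) := by
      intro i hi j hj hij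
      rw [Function.onFun, Finset.disjoint_left]
      intro e hei hej
      -- otherwise `e` could be dropped from the block of `i`, leaving a cover of size `< h * d`
      have hcov : b.biUnion (fun k => if k = i then (funCocircuit B b i).erase e
          else funCocircuit B b k) = Finset.univ := by
        ext x
        simp only [Finset.mem_biUnion, Finset.mem_univ, iff_true]
        obtain ⟨k, hk, hx⟩ := exists_mem_funCocircuit hcard hex hsupp hb x
        by_cases hxe : x = e
        · exact ⟨j, hj, by simpa [Ne.symm hij, hxe] using hej⟩
        · refine ⟨k, hk, ?_⟩
          split_ifs with hki
          · exact Finset.mem_erase.mpr ⟨hxe, hki ▸ hx⟩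
          · exact hx
      have h1 := Finset.card_biUnion_le (s := b) (t := fun k => if k = i then
        (funCocircuit B b i).erase e else funCocircuit B b k)
      rw [hcov, Finset.card_univ, Fintype.card_fin] at h1
      have h2 : ∑ k ∈ b, (if k = i then (funCocircuit B b i).erase e
          else funCocircuit B b k).card < ∑ k ∈ b, (funCocircuit B b k).card := by
        refine Finset.sum_lt_sum (fun k _ => ?_) ⟨i, hi, ?_⟩
        · split_ifs with hki
          · rw [hki]; exact Finset.card_le_card (Finset.erase_subset _ _)
          · exact le_rfl
        · rw [if_pos rfl]; exact Finset.card_erase_lt_of_mem hei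
      omega
    let ε := b.equivFinOfCardEq (hcard b hb)
    let J : Fin d → Finset (Fin n) := fun k => funCocircuit B b (ε.symm k)
    have hJdisj : ∀ k l, k ≠ l → Disjoint (J k) (J l) := fun k l hkl =>
      hdisj (ε.symm k).2 (ε.symm l).2 fun he => hkl (ε.symm.injective (Subtype.ext he))
    refine ⟨J, fun k => hC b hb _ (ε.symm k).2, hJdisj, ?_⟩
    rw [prod_varIdeal J hJdisj]
    congr 2
    ext T
    exact mem_iff_of_partition ⟨b, hb⟩ hcard hex hsupp
      (fun k => (minimal_funCocircuit hcard hex hb (ε.symm k).2).1) hJdisj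
  · rintro ⟨J, hJ, hJdisj, -⟩
    refine le_antisymm hup ?_
    have h1 := Finset.card_le_univ (Finset.univ.biUnion J)
    rw [Finset.card_biUnion fun k _ l _ hkl => hJdisj k l hkl, Fintype.card_fin] at h1
    simpa [hJ, mul_comm] using h1
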